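/- Fix a model size D > 0 and M edge nodes with fronthaul capacities B^fr_m > 0 and backhaul capacities B^bk_m > 0, and K ≥ 1 users. For an assignment a : {1,…,K} → {1,…,M} with occupancy numbers n_m(a), define G(a) = max_m g_m(a), where g_m(a) = D·n_m(a)/B^fr_m + min(D/B^bk_m, n_m(a)·D/B^bk_m) if n_m(a) ≥ 1 and g_m(a) = 0 otherwise. Then the infimum over all pairs (a, r) of assignments a and feasible rate allocations r of the network aggregation latency T(a,r) = max_m [ max_{k: a(k)=m} (D/r_k) + min(D/B^bk_m, n_m(a)·D/B^bk_m) ] equals min over assignments a of G(a); moreover it is attained by any assignment a* minimizing G together with the fair rates r_k = B^fr_m/n_m(a*) for each user k assigned to edge node m. (Lemma 3: the optimal solution of the joint routing and rate-allocation problem P1 is obtained from an optimal solution of the routing-only problem P2 by fair bandwidth sharing.) -/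

import Mathlib

/-!
At a node carrying `n` users the largest of the fronthaul latencies `D / r k` is at least their
mean weighted by the rates `r k`, which is `n * D / ∑ k, r k` and hence at least `n * D / B`. Fair
sharing of the capacity `B` attains this bound, so for a fixed assignment the fair rates are
optimal at all nodes at once, and only the choice of the assignment remains.
-/

open Finset

theorem sum_div_sum_le_sup'_div {ι 𝕜 : Type*} [Field 𝕜] [LinearOrder 𝕜] [IsStrictOrderedRing 𝕜]
    {s : Finset ι} (hs : s.Nonempty) (f : ι → 𝕜) {w : ι → 𝕜} (hw : ∀ i ∈ s, 0 < w i) :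
    (∑ i ∈ s, f i) / ∑ i ∈ s, w i ≤ s.sup' hs fun i => f i / w i := by
  have centerMass_eq : s.centerMass w (fun i => f i / w i) = (∑ i ∈ s, f i) / ∑ i ∈ s, w i := by
    rw [centerMass, smul_eq_mul, inv_mul_eq_div]
    exact congrArg (· / _) (sum_congr rfl fun i hi => mul_div_cancel₀ (f i) (hw i hi).ne')
  exact centerMass_eq ▸ centerMass_le_sup (fun i hi => (hw i hi).le) (sum_pos hw hs)

section Definitions

variable {ι κ 𝕜 : Type*} [Fintype ι] [DecidableEq κ]

/-- The users that the assignment `a` routes to the edge node `m`. -/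
def usersAt (a : ι → κ) (m : κ) : Finset ι := univ.filter fun k => a k = m

variable [Field 𝕜] [LinearOrder 𝕜]

/-- A rate allocation `r` is feasible for the assignment `a` and the fronthaul capacities `B` if
all rates are positive and the rates at each node sum to at most its capacity. -/
def IsFeasibleRate (B : κ → 𝕜) (a : ι → κ) (r : ι → 𝕜) : Prop :=
  (∀ k, 0 < r k) ∧ ∀ m, ∑ k ∈ usersAt a m, r k ≤ B m

/-- The fair rates for the assignment `a`: the users of a node share its capacity equally. -/
def fairRate (B : κ → 𝕜) (a : ι → κ) (k : ι) : 𝕜 := B (a k) / #(usersAt a (a k))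

/-- The aggregation latency of the node `m`: its largest fronthaul latency `D / r k` plus its
backhaul latency `b a m`, an arbitrary function of the assignment. Idle nodes have latency `0`. -/
def nodeLatency (D : 𝕜) (b : (ι → κ) → κ → 𝕜) (a : ι → κ) (r : ι → 𝕜) (m : κ) : 𝕜 :=
  if h : (usersAt a m).Nonempty then (usersAt a m).sup' h (fun k => D / r k) + b a m else 0

/-- The contribution of the node `m` to the objective of the routing-only problem, in which the
rates have been eliminated. -/
def nodeRoutingCost (D : 𝕜) (B : κ → 𝕜) (b : (ι → κ) → κ → 𝕜) (a : ι → κ) (m : κ) : 𝕜 :=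
  if 1 ≤ #(usersAt a m) then D * #(usersAt a m) / B m + b a m else 0

variable [Fintype κ] [Nonempty κ]

/-- The network aggregation latency, the objective of the joint routing and rate-allocation
problem. -/
def networkLatency (D : 𝕜) (b : (ι → κ) → κ → 𝕜) (a : ι → κ) (r : ι → 𝕜) : 𝕜 :=
  univ.sup' univ_nonempty (nodeLatency D b a r)

/-- The objective of the routing-only problem. -/
def routingCost (D : 𝕜) (B : κ → 𝕜) (b : (ι → κ) → κ → 𝕜) (a : ι → κ) : 𝕜 :=
  univ.sup' univ_nonempty (nodeRoutingCost D B b a)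

end Definitions

section RateAllocation

variable {ι κ 𝕜 : Type*} [Fintype ι] [DecidableEq κ]

theorem mem_usersAt {a : ι → κ} {m : κ} {k : ι} : k ∈ usersAt a m ↔ a k = m :=
  mem_filter_univ k

theorem usersAt_apply_nonempty (a : ι → κ) (k : ι) : (usersAt a (a k)).Nonempty :=
  ⟨k, mem_usersAt.2 rfl⟩

theorem fairRate_of_mem_usersAt [Field 𝕜] (B : κ → 𝕜) {a : ι → κ} {m : κ} {k : ι}
    (hk : k ∈ usersAt a m) : fairRate B a k = B m / #(usersAt a m) := by
  rw [fairRate, mem_usersAt.1 hk]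

theorem sum_fairRate [Field 𝕜] [CharZero 𝕜] (B : κ → 𝕜) {a : ι → κ} {m : κ}
    (hm : (usersAt a m).Nonempty) : ∑ k ∈ usersAt a m, fairRate B a k = B m := by
  have card_ne_zero : (#(usersAt a m) : 𝕜) ≠ 0 := Nat.cast_ne_zero.2 hm.card_ne_zero
  rw [sum_congr rfl fun k hk => fairRate_of_mem_usersAt B hk, sum_const, nsmul_eq_mul,
    mul_div_cancel₀ _ card_ne_zero]

variable [Field 𝕜] [LinearOrder 𝕜]

theorem nodeLatency_fairRate (D : 𝕜) (B : κ → 𝕜) (b : (ι → κ) → κ → 𝕜) (a : ι → κ) (m : κ) :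
    nodeLatency D b a (fairRate B a) m = nodeRoutingCost D B b a m := by
  simp only [nodeLatency, nodeRoutingCost, one_le_card]
  split_ifs with hm
  · congr 1
    exact sup'_eq_of_forall hm _ fun k hk => by
      rw [fairRate_of_mem_usersAt B hk, div_div_eq_mul_div]
  · rfl

theorem networkLatency_fairRate [Fintype κ] [Nonempty κ] (D : 𝕜) (B : κ → 𝕜)
    (b : (ι → κ) → κ → 𝕜) (a : ι → κ) :
    networkLatency D b a (fairRate B a) = routingCost D B b a :=
  sup'_congr _ rfl fun m _ => nodeLatency_fairRate D B b a m

variable [IsStrictOrderedRing 𝕜]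

theorem isFeasibleRate_fairRate {B : κ → 𝕜} (hB : ∀ m, 0 < B m) (a : ι → κ) :
    IsFeasibleRate B a (fairRate B a) := by
  refine ⟨fun k => div_pos (hB _) (Nat.cast_pos.2 (usersAt_apply_nonempty a k).card_pos),
    fun m => ?_⟩
  rcases (usersAt a m).eq_empty_or_nonempty with idle | busy
  · simpa only [idle, sum_empty] using (hB m).le
  · exact (sum_fairRate B busy).le

theorem nodeRoutingCost_le_nodeLatency {D : 𝕜} (hD : 0 ≤ D) {B : κ → 𝕜} (b : (ι → κ) → κ → 𝕜)
    {a : ι → κ} {r : ι → 𝕜} (hr : IsFeasibleRate B a r) (m : κ) :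
    nodeRoutingCost D B b a m ≤ nodeLatency D b a r m := by
  simp only [nodeLatency, nodeRoutingCost, one_le_card]
  split_ifs with hm
  · have sum_rate_pos : 0 < ∑ k ∈ usersAt a m, r k := sum_pos (fun k _ => hr.1 k) hm
    gcongr
    calc D * #(usersAt a m) / B m
        ≤ D * #(usersAt a m) / ∑ k ∈ usersAt a m, r k := by gcongr; exact hr.2 m
      _ = (∑ _k ∈ usersAt a m, D) / ∑ k ∈ usersAt a m, r k := by
          rw [sum_const, nsmul_eq_mul, mul_comm]
      _ ≤ (usersAt a m).sup' hm fun k => D / r k :=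
          sum_div_sum_le_sup'_div hm _ fun k _ => hr.1 k
  · exact le_rfl

theorem routingCost_le_networkLatency [Fintype κ] [Nonempty κ] {D : 𝕜} (hD : 0 ≤ D)
    {B : κ → 𝕜} (b : (ι → κ) → κ → 𝕜) {a : ι → κ} {r : ι → 𝕜} (hr : IsFeasibleRate B a r) :
    routingCost D B b a ≤ networkLatency D b a r :=
  sup'_mono_fun fun m _ => nodeRoutingCost_le_nodeLatency hD b hr m

theorem joint_routing_rate_allocation_optimal_general [DecidableEq ι] [Fintype κ] [Nonempty κ]
    {D : 𝕜} (hD : 0 ≤ D) {B : κ → 𝕜} (hB : ∀ m, 0 < B m) (b : (ι → κ) → κ → 𝕜) :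
    IsLeast {x | ∃ a r, IsFeasibleRate B a r ∧ x = networkLatency D b a r}
      (univ.inf' univ_nonempty (routingCost D B b)) ∧
    ∀ a, (∀ a', routingCost D B b a ≤ routingCost D B b a') →
      networkLatency D b a (fairRate B a) = univ.inf' univ_nonempty (routingCost D B b) := by
  refine ⟨⟨?_, ?_⟩, fun a ha => ?_⟩
  · obtain ⟨a, -, ha⟩ := exists_mem_eq_inf' univ_nonempty (routingCost D B b)
    exact ⟨a, fairRate B a, isFeasibleRate_fairRate hB a,
      ha.trans (networkLatency_fairRate D B b a).symm⟩
  · rintro _ ⟨a, r, hr, rfl⟩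
    exact (inf'_le _ (mem_univ a)).trans (routingCost_le_networkLatency hD b hr)
  · rw [networkLatency_fairRate]
    exact le_antisymm (le_inf' _ _ fun a' _ => ha a') (inf'_le _ (mem_univ a))

end RateAllocation

/-- Lemma 3: fix a model size `D > 0`, `M ≥ 1` edge nodes with fronthaul capacities
`Bfr m > 0` and backhaul capacities `Bbk m > 0`, and `K ≥ 1` users.  For an assignment
`a : Fin K → Fin M` with occupancy numbers `nn a m`, let
`G a = max_m g_m(a)` where `g_m(a) = D·nn a m/Bfr m + min (D/Bbk m) (nn a m·D/Bbk m)` if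
`nn a m ≥ 1` and `0` otherwise.  Then the infimum over all pairs `(a, r)` of assignments
and feasible rate allocations of the network aggregation latency `T a r` equals
`min_a G a` (it is the least, i.e. attained, element of the set of achievable latencies);
moreover it is attained by any assignment `a` minimizing `G` together with the fair
rates `r k = Bfr (a k) / nn a (a k)`. -/
theorem joint_routing_rate_allocation_optimal
    (K M : ℕ) (hK : 1 ≤ K) (hM : 0 < M) (D : ℝ) (hD : 0 < D)
    (Bfr Bbk : Fin M → ℝ) (hBfr : ∀ m, 0 < Bfr m) (hBbk : ∀ m, 0 < Bbk m)
    (nn : (Fin K → Fin M) → Fin M → ℕ)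
    (hnn : ∀ a m, nn a m = (Finset.univ.filter (fun k => a k = m)).card)
    (G : (Fin K → Fin M) → ℝ)
    (hG : ∀ a, G a = Finset.univ.sup'
        (Finset.univ_nonempty_iff.mpr (Fin.pos_iff_nonempty.mp hM))
        (fun m => if 1 ≤ nn a m then
            D * (nn a m : ℝ) / Bfr m + min (D / Bbk m) ((nn a m : ℝ) * D / Bbk m)
          else 0))
    (T : (Fin K → Fin M) → (Fin K → ℝ) → ℝ)
    (hT : ∀ a r, T a r = Finset.univ.sup'
        (Finset.univ_nonempty_iff.mpr (Fin.pos_iff_nonempty.mp hM))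
        (fun m =>
          if h : (Finset.univ.filter (fun k => a k = m)).Nonempty then
            (Finset.univ.filter (fun k => a k = m)).sup' h (fun k => D / r k)
              + min (D / Bbk m) ((nn a m : ℝ) * D / Bbk m)
          else 0)) :
    IsLeast
      { x : ℝ | ∃ (a : Fin K → Fin M) (r : Fin K → ℝ), (∀ k, 0 < r k) ∧
          (∀ m, ∑ k ∈ Finset.univ.filter (fun k => a k = m), r k ≤ Bfr m) ∧
          x = T a r }
      (Finset.univ.inf'
        (Finset.univ_nonempty_iff.mpr ⟨fun _ => ⟨0, hM⟩⟩) G)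
    ∧ ∀ a : Fin K → Fin M, (∀ a' : Fin K → Fin M, G a ≤ G a') →
        T a (fun k => Bfr (a k) / (nn a (a k) : ℝ))
          = Finset.univ.inf'
              (Finset.univ_nonempty_iff.mpr ⟨fun _ => ⟨0, hM⟩⟩) G := by
  have : Nonempty (Fin M) := Fin.pos_iff_nonempty.1 hM
  obtain rfl : nn = fun a m => #(usersAt a m) := funext₂ hnn
  let b : (Fin K → Fin M) → Fin M → ℝ := fun a m =>
    min (D / Bbk m) (#(usersAt a m) * D / Bbk m)
  obtain rfl : G = routingCost D Bfr b := funext hG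
  obtain rfl : T = networkLatency D b := funext₂ hT
  simp only [← and_assoc]
  exact joint_routing_rate_allocation_optimal_general hD.le hBfr b
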